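/- (Weighted Poincaré inequality.) Let φ:ℝ^N→ℝ be continuous with nonempty compact support of diameter d, with 0≤φ≤1, and such that the superlevel sets {x∈ℝ^N : φ(x)≥a} are convex for every a≤1. Then for every continuously differentiable function u:ℝ^N→ℝ such that u and |∇u| are square integrable, ∫_{ℝ^N} (u(x)−u_φ)² φ(x) dx ≤ (2 d² μ_N(supp φ)/‖φ‖_{L¹(ℝ^N)}) · ∫_{ℝ^N} |∇u(x)|² φ(x) dx, where u_φ = (∫_{ℝ^N} u(x)φ(x)dx)/(∫_{ℝ^N} φ(x)dx). -/

import Mathlib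

open MeasureTheory

open scoped ENNReal

/-- One-dimensional Brunn–Minkowski inequality for midpoints. -/
theorem volume_add_volume_le_two_mul_of_midpoint_mem {A B C : Set ℝ} (hA : MeasurableSet A)
    (hB : MeasurableSet B) (hAne : A.Nonempty) (hBne : B.Nonempty)
    (h : ∀ x ∈ A, ∀ y ∈ B, (x + y) / 2 ∈ C) :
    volume A + volume B ≤ 2 * volume C := by
  have compact_case : ∀ K ⊆ A, IsCompact K → K.Nonempty → ∀ L ⊆ B, IsCompact L → L.Nonempty →
      volume K + volume L ≤ 2 * volume C := by
    intro K hKA hK hKne L hLB hL hLne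
    obtain ⟨a, haK, ha⟩ := hK.exists_isGreatest hKne
    obtain ⟨b, hbL, hb⟩ := hL.exists_isLeast hLne
    set K' : Set ℝ := (fun x => x + b) '' K with hK'
    set L' : Set ℝ := (fun y => a + y) '' L with hL'
    have hK'c : IsCompact K' := hK.image (by fun_prop)
    have hL'c : IsCompact L' := hL.image (by fun_prop)
    have hinter : K' ∩ L' ⊆ {a + b} := by
      rintro z ⟨⟨x, hx, rfl⟩, ⟨y, hy, hxy⟩⟩
      have h1 := ha hx
      have h2 := hb hy
      simp only [Set.mem_singleton_iff] at hxy ⊢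
      linarith
    have hdisj : AEDisjoint volume K' L' :=
      measure_mono_null hinter (by simp)
    have hsub : K' ∪ L' ⊆ (fun c => 2 * c) '' C := by
      rintro z (⟨x, hx, rfl⟩ | ⟨y, hy, rfl⟩)
      · exact ⟨_, h x (hKA hx) b (hLB hbL), by ring⟩
      · exact ⟨_, h a (hKA haK) y (hLB hy), by ring⟩
    have hvK : volume K' = volume K := by
      rw [hK', Set.image_add_right, measure_preimage_add_right]
    have hvL : volume L' = volume L := by
      rw [hL', Set.image_add_left, measure_preimage_add]
    have hvC : volume ((fun c : ℝ => 2 * c) '' C) = 2 * volume C := by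
      have := Measure.addHaar_image_homothety (volume : Measure ℝ) 0 2 C
      have h2 : (AffineMap.homothety (0 : ℝ) (2 : ℝ) : ℝ → ℝ) = fun c => 2 * c := by
        ext c; simp [AffineMap.homothety_apply]
      rw [h2] at this
      simpa using this
    rw [← hvK, ← hvL, ← measure_union₀ hL'c.measurableSet.nullMeasurableSet hdisj, ← hvC]
    exact measure_mono hsub
  have half : ∀ L ⊆ B, IsCompact L → L.Nonempty → volume A + volume L ≤ 2 * volume C := by
    intro L hLB hL hLne
    obtain ⟨a, ha⟩ := hAne
    have hle : volume L ≤ 2 * volume C := by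
      simpa using compact_case {a} (by simpa using ha) isCompact_singleton (by simp) L hLB hL hLne
    refine add_le_of_le_tsub_right_of_le hle ?_
    rw [hA.measure_eq_iSup_isCompact]
    refine iSup_le fun K => iSup_le fun hKA => iSup_le fun hK => ?_
    refine (measure_mono (Set.subset_insert a K)).trans (ENNReal.le_sub_of_add_le_right ?_ ?_)
    · exact hL.measure_lt_top.ne
    · exact compact_case _ (Set.insert_subset ha hKA) (hK.insert a) (by simp) L hLB hL hLne
  obtain ⟨b, hb⟩ := hBne
  have hle : volume A ≤ 2 * volume C := by
    simpa using half {b} (by simpa using hb) isCompact_singleton (by simp)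
  by_cases hAtop : volume A = ∞
  · rw [hAtop, top_le_iff] at hle
    simp [hle]
  refine add_le_of_le_tsub_left_of_le hle ?_
  rw [hB.measure_eq_iSup_isCompact]
  refine iSup_le fun L => iSup_le fun hLB => iSup_le fun hL => ?_
  refine (measure_mono (Set.subset_insert b L)).trans (ENNReal.le_sub_of_add_le_left hAtop ?_)
  exact half _ (Set.insert_subset hb hLB) (hL.insert b) (by simp)

/-- Layer cake formula for an `ℝ≥0∞`-valued function bounded by `1`. -/
theorem lintegral_eq_setLIntegral_Ioo_meas_lt {α : Type*} [MeasurableSpace α] (μ : Measure α)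
    {f : α → ℝ≥0∞} (hf : Measurable f) (hf1 : ∀ x, f x ≤ 1) :
    ∫⁻ x, f x ∂μ = ∫⁻ t in Set.Ioo (0 : ℝ) 1, μ {x | ENNReal.ofReal t < f x} := by
  have hfin : ∀ x, f x ≠ ∞ := fun x => ((hf1 x).trans_lt ENNReal.one_lt_top).ne
  have h1 : ∫⁻ x, f x ∂μ = ∫⁻ x, ENNReal.ofReal (f x).toReal ∂μ := by
    simp [ENNReal.ofReal_toReal (hfin _)]
  rw [h1, lintegral_eq_lintegral_meas_lt μ (Filter.Eventually.of_forall fun x => by simp)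
    hf.ennreal_toReal.aemeasurable, ← Set.Ioo_union_Ici_eq_Ioi (zero_lt_one (α := ℝ)),
    lintegral_union measurableSet_Ici (Set.disjoint_left.2 fun x hx hx' => not_lt.2 hx' hx.2)]
  have h2 : ∫⁻ t in Set.Ici (1 : ℝ), μ {a | t < (f a).toReal} = 0 := by
    rw [setLIntegral_congr_fun (g := fun _ => 0) measurableSet_Ici, lintegral_zero]
    intro t ht
    have : {a | t < (f a).toReal} = ∅ := by
      ext a
      have : (f a).toReal ≤ 1 := by
        simpa using ENNReal.toReal_mono ENNReal.one_ne_top (hf1 a)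
      simpa using this.trans ht
    simp [this]
  rw [h2, add_zero]
  refine setLIntegral_congr_fun measurableSet_Ioo fun t ht => ?_
  simp only [ENNReal.ofReal_lt_iff_lt_toReal ht.1.le (hfin _)]

theorem ENNReal.four_mul_le_add_sq (x y : ℝ≥0∞) : 4 * (x * y) ≤ (x + y) ^ 2 := by
  wlog h : x ≤ y generalizing x y
  · rw [mul_comm x, add_comm]
    exact this y x (le_of_not_ge h)
  obtain ⟨z, rfl⟩ := exists_add_of_le h
  calc 4 * (x * (x + z)) ≤ 4 * (x * (x + z)) + z ^ 2 := le_self_add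
    _ = (x + (x + z)) ^ 2 := by ring

/-- Linear form of the Prékopa–Leindler inequality on `ℝ` for functions with supremum `1`. -/
theorem prekopa_leindler_real_of_iSup_eq_one {f g h : ℝ → ℝ≥0∞} (hf : Measurable f)
    (hg : Measurable g) (hh : Measurable h) (hf1 : ⨆ x, f x = 1) (hg1 : ⨆ x, g x = 1)
    (hfgh : ∀ x y, f x * g y ≤ h ((x + y) / 2) ^ 2) :
    (∫⁻ x, f x) + ∫⁻ x, g x ≤ 2 * ∫⁻ x, h x := by
  have hfle : ∀ x, f x ≤ 1 := fun x => hf1 ▸ le_iSup f x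
  have hgle : ∀ x, g x ≤ 1 := fun x => hg1 ▸ le_iSup g x
  have hmin : ∫⁻ x, min (h x) 1 ≤ ∫⁻ x, h x := lintegral_mono fun x => min_le_left _ _
  refine le_trans ?_ (mul_le_mul_right hmin 2)
  have meas_anti : ∀ k : ℝ → ℝ≥0∞,
      Measurable fun t : ℝ => volume {x | ENNReal.ofReal t < k x} := fun k =>
    Antitone.measurable fun s t hst => measure_mono fun x (hx : _ < _) =>
      (ENNReal.ofReal_le_ofReal hst).trans_lt hx
  rw [lintegral_eq_setLIntegral_Ioo_meas_lt _ hf hfle,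
    lintegral_eq_setLIntegral_Ioo_meas_lt _ hg hgle,
    lintegral_eq_setLIntegral_Ioo_meas_lt _ (hh.min measurable_const) fun x => min_le_right _ _,
    ← lintegral_add_left (meas_anti f), ← lintegral_const_mul _ (meas_anti _)]
  refine setLIntegral_mono ((meas_anti _).const_mul 2) fun t ht => ?_
  have ht1 : ENNReal.ofReal t < 1 := by simpa using ht.2
  refine volume_add_volume_le_two_mul_of_midpoint_mem (measurableSet_lt measurable_const hf)
    (measurableSet_lt measurable_const hg) ?_ ?_ ?_
  · exact lt_iSup_iff.1 (hf1 ▸ ht1)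
  · exact lt_iSup_iff.1 (hg1 ▸ ht1)
  · intro x hx y hy
    refine lt_min ?_ ht1
    have : ENNReal.ofReal t ^ 2 < h ((x + y) / 2) ^ 2 := by
      refine lt_of_lt_of_le ?_ (hfgh x y)
      rw [sq]
      exact ENNReal.mul_lt_mul hx hy
    exact lt_of_pow_lt_pow_left' 2 this

/-- The Prékopa–Leindler inequality on `ℝ`, for the exponent `1 / 2`. -/
theorem prekopa_leindler_real {f g h : ℝ → ℝ≥0∞} (hf : Measurable f)
    (hg : Measurable g) (hh : Measurable h)
    (hfgh : ∀ x y, f x * g y ≤ h ((x + y) / 2) ^ 2) :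
    (∫⁻ x, f x) * ∫⁻ x, g x ≤ (∫⁻ x, h x) ^ 2 := by
  have bounded : ∀ f g : ℝ → ℝ≥0∞, Measurable f → Measurable g → ⨆ x, f x ≠ ∞ → ⨆ x, g x ≠ ∞ →
      (∀ x y, f x * g y ≤ h ((x + y) / 2) ^ 2) →
      (∫⁻ x, f x) * ∫⁻ x, g x ≤ (∫⁻ x, h x) ^ 2 := by
    intro f g hf hg hft hgt hfgh
    set a := ⨆ x, f x with ha
    set b := ⨆ x, g x with hb
    rcases eq_or_ne a 0 with ha0 | ha0
    · have : ∀ x, f x = 0 := by simpa [ha0, eq_comm] using ha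
      simp [this]
    rcases eq_or_ne b 0 with hb0 | hb0
    · have : ∀ x, g x = 0 := by simpa [hb0, eq_comm] using hb
      simp [this]
    set c : ℝ≥0∞ := (a⁻¹ * b⁻¹) ^ (1 / 2 : ℝ) with hc
    have hc2 : c ^ 2 = a⁻¹ * b⁻¹ := by
      rw [hc, ← ENNReal.rpow_natCast, ← ENNReal.rpow_mul]; norm_num
    have key := prekopa_leindler_real_of_iSup_eq_one (f := fun x => a⁻¹ * f x)
      (g := fun x => b⁻¹ * g x) (h := fun x => c * h x) (hf.const_mul _) (hg.const_mul _)
      (hh.const_mul _) (by rw [← ENNReal.mul_iSup, ENNReal.inv_mul_cancel ha0 hft])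
      (by rw [← ENNReal.mul_iSup, ENNReal.inv_mul_cancel hb0 hgt]) (by
        intro x y
        rw [mul_pow, hc2, mul_mul_mul_comm]
        gcongr
        exact hfgh x y)
    rw [lintegral_const_mul _ hf, lintegral_const_mul _ hg, lintegral_const_mul _ hh] at key
    set F := ∫⁻ x, f x
    set G := ∫⁻ x, g x
    set H := ∫⁻ x, h x
    have h4 : 4 * ((a⁻¹ * F) * (b⁻¹ * G)) ≤ (2 * (c * H)) ^ 2 :=
      (ENNReal.four_mul_le_add_sq _ _).trans (by gcongr)
    have h5 : (4 * (a⁻¹ * b⁻¹)) * (F * G) ≤ (4 * (a⁻¹ * b⁻¹)) * H ^ 2 := by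
      convert h4 using 1
      · ring
      · rw [mul_pow, mul_pow, hc2]; ring
    refine (ENNReal.mul_le_mul_iff_right ?_ ?_).1 h5
    · simp [hft, hgt]
    · simp [ENNReal.mul_eq_top, ha0, hb0]
  have trunc : ∀ f : ℝ → ℝ≥0∞, Measurable f → ∫⁻ x, f x = ⨆ n : ℕ, ∫⁻ x, min (f x) n := by
    intro f hf
    rw [← lintegral_iSup (fun n => hf.min measurable_const) fun m n hmn x => by
      simp only; gcongr]
    congr with x
    rw [← inf_iSup_eq, ENNReal.iSup_natCast, inf_top_eq]
  rw [trunc f hf, trunc g hg, ENNReal.iSup_mul]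
  refine iSup_le fun m => ?_
  rw [ENNReal.mul_iSup]
  refine iSup_le fun n => bounded _ _ (hf.min measurable_const) (hg.min measurable_const) ?_ ?_ ?_
  · exact ((iSup_le fun x => min_le_right _ _).trans_lt (ENNReal.natCast_lt_top m)).ne
  · exact ((iSup_le fun x => min_le_right _ _).trans_lt (ENNReal.natCast_lt_top n)).ne
  · exact fun x y => (mul_le_mul' (min_le_left _ _) (min_le_left _ _)).trans (hfgh x y)

/-- The Prékopa–Leindler inequality on `Fin n → ℝ`, for the exponent `1 / 2`. -/
theorem prekopa_leindler_pi (n : ℕ) {f g h : (Fin n → ℝ) → ℝ≥0∞} (hf : Measurable f)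
    (hg : Measurable g) (hh : Measurable h)
    (hfgh : ∀ x y, f x * g y ≤ h ((1 / 2 : ℝ) • (x + y)) ^ 2) :
    (∫⁻ x, f x) * ∫⁻ x, g x ≤ (∫⁻ x, h x) ^ 2 := by
  induction n with
  | zero =>
    have const : ∀ k : (Fin 0 → ℝ) → ℝ≥0∞, ∫⁻ x, k x = k 0 := fun k => by
      rw [lintegral_congr fun x => congrArg k (Subsingleton.elim x 0), lintegral_const,
        volume_pi, Measure.pi_empty_univ, mul_one]
    simpa [const] using hfgh 0 0
  | succ n ih =>
    let e := (MeasurableEquiv.piFinSuccAbove (fun _ : Fin (n + 1) => ℝ) 0).symm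
    have he : MeasurePreserving e := (volume_preserving_piFinSuccAbove _ 0).symm _
    have fub : ∀ k : (Fin (n + 1) → ℝ) → ℝ≥0∞, Measurable k →
        ∫⁻ x, k x = ∫⁻ s : ℝ, ∫⁻ x : Fin n → ℝ, k (e (s, x)) := by
      intro k hk
      rw [← he.lintegral_comp hk, Measure.volume_eq_prod,
        lintegral_prod (fun p => k (e p)) (hk.comp e.measurable).aemeasurable]
    have meas : ∀ k : (Fin (n + 1) → ℝ) → ℝ≥0∞, Measurable k →
        Measurable fun s : ℝ => ∫⁻ x : Fin n → ℝ, k (e (s, x)) := fun k hk =>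
      Measurable.lintegral_prod_right' (hk.comp e.measurable)
    have slice : ∀ k : (Fin (n + 1) → ℝ) → ℝ≥0∞, Measurable k → ∀ s : ℝ,
        Measurable fun x : Fin n → ℝ => k (e (s, x)) := fun k hk s =>
      (hk.comp e.measurable).comp measurable_prodMk_left
    rw [fub f hf, fub g hg, fub h hh]
    refine prekopa_leindler_real (meas f hf) (meas g hg) (meas h hh) fun s t => ?_
    refine ih (slice f hf s) (slice g hg t) (slice h hh _) fun x y => ?_
    convert hfgh (e (s, x)) (e (t, y)) using 3
    ext i
    refine Fin.cases ?_ (fun j => ?_) i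
    · simp [e, MeasurableEquiv.piFinSuccAbove]; ring
    · simp [e, MeasurableEquiv.piFinSuccAbove]; ring

/-- The Prékopa–Leindler inequality on Euclidean space, for the exponent `1 / 2`. -/
theorem prekopa_leindler (n : ℕ) {f g h : EuclideanSpace ℝ (Fin n) → ℝ≥0∞} (hf : Measurable f)
    (hg : Measurable g) (hh : Measurable h)
    (hfgh : ∀ x y, f x * g y ≤ h (midpoint ℝ x y) ^ 2) :
    (∫⁻ x, f x) * ∫⁻ x, g x ≤ (∫⁻ x, h x) ^ 2 := by
  have hp := PiLp.volume_preserving_toLp (Fin n)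
  rw [← hp.lintegral_comp hf, ← hp.lintegral_comp hg, ← hp.lintegral_comp hh]
  refine prekopa_leindler_pi n (hf.comp hp.measurable) (hg.comp hp.measurable)
    (hh.comp hp.measurable) fun x y => ?_
  convert hfgh (WithLp.toLp 2 x) (WithLp.toLp 2 y) using 3
  simp [midpoint_eq_smul_add]

/-- The variance with respect to a weight, written as a double integral. -/
theorem integral_prod_sub_sq_mul {α : Type*} [MeasurableSpace α] {μ : Measure α} [SFinite μ]
    {u w : α → ℝ} (hw : Integrable w μ) (huw : Integrable (fun x => u x * w x) μ)
    (hu2w : Integrable (fun x => u x ^ 2 * w x) μ) :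
    ∫ z, (u z.1 - u z.2) ^ 2 * (w z.1 * w z.2) ∂μ.prod μ =
      2 * ((∫ x, w x ∂μ) * (∫ x, u x ^ 2 * w x ∂μ) - (∫ x, u x * w x ∂μ) ^ 2) := by
  have expand : ∀ z : α × α, (u z.1 - u z.2) ^ 2 * (w z.1 * w z.2) =
      (u z.1 ^ 2 * w z.1) * w z.2 + w z.1 * (u z.2 ^ 2 * w z.2)
        - 2 * ((u z.1 * w z.1) * (u z.2 * w z.2)) := fun z => by ring
  simp only [expand]
  rw [integral_sub (f := fun z : α × α => (u z.1 ^ 2 * w z.1) * w z.2 +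
        w z.1 * (u z.2 ^ 2 * w z.2)) ((hu2w.mul_prod hw).add (hw.mul_prod hu2w))
      ((huw.mul_prod huw).const_mul 2),
    integral_add (hu2w.mul_prod hw) (hw.mul_prod hu2w), integral_const_mul,
    integral_prod_mul (fun x => u x ^ 2 * w x) w, integral_prod_mul w (fun x => u x ^ 2 * w x),
    integral_prod_mul (fun x => u x * w x) (fun x => u x * w x)]
  ring

theorem integral_sub_const_sq_mul {α : Type*} [MeasurableSpace α] {μ : Measure α}
    {u w : α → ℝ} (hw : Integrable w μ) (huw : Integrable (fun x => u x * w x) μ)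
    (hu2w : Integrable (fun x => u x ^ 2 * w x) μ) (m : ℝ) :
    ∫ x, (u x - m) ^ 2 * w x ∂μ =
      (∫ x, u x ^ 2 * w x ∂μ) - 2 * m * (∫ x, u x * w x ∂μ) + m ^ 2 * ∫ x, w x ∂μ := by
  rw [← integral_const_mul, ← integral_const_mul, ← integral_sub hu2w (huw.const_mul _),
    ← integral_add (f := fun x => u x ^ 2 * w x - 2 * m * (u x * w x))
      (hu2w.sub (huw.const_mul _)) (hw.const_mul _)]
  refine integral_congr_ae (.of_forall fun x => ?_)
  simp only
  ring

/-- On a compact convex set, `ε u x - ε u y` is controlled by the infimal convolution of `ε u` with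
a quadratic cost, up to an error `δ` on the gradient. -/
theorem exists_forall_mul_sub_le {E : Type*} [NormedAddCommGroup E] [NormedSpace ℝ E]
    {K : Set E} (hK : IsCompact K) (hKc : Convex ℝ K) {u : E → ℝ} (hu : ContDiff ℝ 1 u)
    {s δ : ℝ} (hs : 0 < s) (hδ : 0 < δ) :
    ∃ ε₀ > 0, ∀ ε, 0 < ε → ε ≤ ε₀ → ∀ x ∈ K, ∀ y ∈ K,
      ε * (u x - u y) ≤ s * ε ^ 2 * (‖fderiv ℝ u x‖ + δ) ^ 2 + ‖x - y‖ ^ 2 / (4 * s) := by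
  have hDc : Continuous (fderiv ℝ u) := hu.continuous_fderiv one_ne_zero
  obtain ⟨η, hη, hunif⟩ := Metric.uniformContinuousOn_iff.1
    (hK.uniformContinuousOn_of_continuous hDc.continuousOn) δ hδ
  obtain ⟨M, hM⟩ := hK.exists_bound_of_continuousOn hu.continuous.continuousOn
  have hquad : ∀ ε a r : ℝ, ε * (a * r) ≤ s * ε ^ 2 * a ^ 2 + r ^ 2 / (4 * s) := by
    intro ε a r
    have : s * ε ^ 2 * a ^ 2 + r ^ 2 / (4 * s) - ε * (a * r) =
        s * (ε * a - r / (2 * s)) ^ 2 := by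
      field_simp; ring
    nlinarith [mul_nonneg hs.le (sq_nonneg (ε * a - r / (2 * s)))]
  refine ⟨η ^ 2 / (4 * s) / (2 * |M| + 1), by positivity, fun ε hε hε₀ x hx y hy => ?_⟩
  rcases lt_or_ge (dist x y) η with hxy | hxy
  · have hmv : ‖u x - u y‖ ≤ (‖fderiv ℝ u x‖ + δ) * ‖x - y‖ := by
      refine Convex.norm_image_sub_le_of_norm_fderiv_le (𝕜 := ℝ) (s := K ∩ Metric.ball x η)
        (fun z _ => (hu.differentiable one_ne_zero) z) (fun z hz => ?_)
        (hKc.inter (convex_ball x η)) ⟨hy, by rwa [Metric.mem_ball']⟩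
        ⟨hx, Metric.mem_ball_self hη⟩
      have := hunif z hz.1 x hx hz.2
      rw [dist_eq_norm] at this
      have h3 := norm_le_norm_add_norm_sub' (fderiv ℝ u z) (fderiv ℝ u x)
      linarith
    calc ε * (u x - u y) ≤ ε * ((‖fderiv ℝ u x‖ + δ) * ‖x - y‖) := by
          gcongr; exact (le_abs_self _).trans hmv
      _ ≤ _ := hquad _ _ _
  · rw [dist_eq_norm] at hxy
    have h1 : u x - u y ≤ 2 * |M| + 1 := by
      have := (abs_le.1 ((hM x hx).trans (le_abs_self M))).2
      have := (abs_le.1 ((hM y hy).trans (le_abs_self M))).1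
      linarith
    calc ε * (u x - u y) ≤ ε * (2 * |M| + 1) := by gcongr
      _ ≤ η ^ 2 / (4 * s) := (le_div_iff₀ (by positivity)).1 hε₀
      _ ≤ ‖x - y‖ ^ 2 / (4 * s) := by gcongr
      _ ≤ _ := le_add_of_nonneg_left (by positivity)

theorem two_add_sq_le_exp_add_exp_neg (z : ℝ) : 2 + z ^ 2 ≤ Real.exp z + Real.exp (-z) := by
  have h : Real.exp z + Real.exp (-z) = 2 + 4 * Real.sinh (z / 2) ^ 2 := by
    have h1 : Real.exp z = Real.exp (z / 2) ^ 2 := by rw [← Real.exp_nat_mul]; ring_nf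
    have h2 : Real.exp (-z) = Real.exp (-(z / 2)) ^ 2 := by rw [← Real.exp_nat_mul]; ring_nf
    have h3 : Real.exp (z / 2) * Real.exp (-(z / 2)) = 1 := by rw [← Real.exp_add]; simp
    rw [Real.sinh_eq, h1, h2]
    linear_combination 2 * h3
  have h2 : (z / 2) ^ 2 ≤ Real.sinh (z / 2) ^ 2 := by
    rw [sq_le_sq, Real.abs_sinh]
    exact Real.self_le_sinh_iff.2 (abs_nonneg _)
  linarith

theorem integrable_prod_restrict_of_continuous {E : Type*} [MeasurableSpace E]
    [TopologicalSpace E] [T2Space E] [SecondCountableTopology E] [OpensMeasurableSpace E]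
    {μ : Measure E} [SFinite μ] [IsFiniteMeasureOnCompacts μ] {K : Set E} (hK : IsCompact K)
    {F : E × E → ℝ} (hF : Continuous F) :
    Integrable F ((μ.restrict K).prod (μ.restrict K)) := by
  rw [Measure.prod_restrict]
  obtain ⟨M, hM⟩ := (hK.prod hK).exists_bound_of_continuousOn hF.continuousOn
  refine Measure.integrableOn_of_bounded (M := M) ?_ hF.measurable.aestronglyMeasurable ?_
  · rw [Measure.prod_prod]
    exact (ENNReal.mul_lt_top hK.measure_lt_top hK.measure_lt_top).ne
  · exact (ae_restrict_iff' (hK.measurableSet.prod hK.measurableSet)).2 (.of_forall hM)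

section Gaussian

variable {N : ℕ} {K : Set (EuclideanSpace ℝ (Fin N))} {u : EuclideanSpace ℝ (Fin N) → ℝ}

/-- Infimal convolution inequality for a Gaussian weight restricted to a compact convex set. -/
theorem setIntegral_exp_mul_setIntegral_exp_neg_le (hK : IsCompact K) (hKc : Convex ℝ K)
    {f g : EuclideanSpace ℝ (Fin N) → ℝ} (hf : Continuous f) (hg : Continuous g)
    (c : EuclideanSpace ℝ (Fin N)) {s : ℝ} (hs : 0 < s)
    (hfg : ∀ x ∈ K, ∀ y ∈ K, f x - g y ≤ ‖x - y‖ ^ 2 / (4 * s)) :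
    (∫ x in K, Real.exp (f x) * Real.exp (-(‖x - c‖ ^ 2 / (2 * s)))) *
      (∫ x in K, Real.exp (-g x) * Real.exp (-(‖x - c‖ ^ 2 / (2 * s)))) ≤
      (∫ x in K, Real.exp (-(‖x - c‖ ^ 2 / (2 * s)))) ^ 2 := by
  have conv : ∀ k : EuclideanSpace ℝ (Fin N) → ℝ, Continuous k → (∀ x, 0 ≤ k x) →
      ∫⁻ x, K.indicator (fun x => ENNReal.ofReal (k x)) x = ENNReal.ofReal (∫ x in K, k x) := by
    intro k hk hk0
    rw [lintegral_indicator hK.measurableSet, ofReal_integral_eq_lintegral_ofReal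
      (hk.continuousOn.integrableOn_compact hK) (.of_forall hk0)]
  have meas : ∀ k : EuclideanSpace ℝ (Fin N) → ℝ, Continuous k →
      Measurable (K.indicator (fun x => ENNReal.ofReal (k x))) := fun k hk =>
    hk.measurable.ennreal_ofReal.indicator hK.measurableSet
  have hfc : Continuous fun x => Real.exp (f x) * Real.exp (-(‖x - c‖ ^ 2 / (2 * s))) := by
    fun_prop
  have hgc : Continuous fun x => Real.exp (-g x) * Real.exp (-(‖x - c‖ ^ 2 / (2 * s))) := by
    fun_prop
  have hhc : Continuous fun x => Real.exp (-(‖x - c‖ ^ 2 / (2 * s))) := by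
    fun_prop
  have key := prekopa_leindler N (meas _ hfc) (meas _ hgc) (meas _ hhc) (by
    intro x y
    by_cases hx : x ∈ K
    swap
    · simp [hx]
    by_cases hy : y ∈ K
    swap
    · simp [hy]
    rw [Set.indicator_of_mem hx, Set.indicator_of_mem hy,
      Set.indicator_of_mem (hKc.midpoint_mem hx hy), ← ENNReal.ofReal_mul (by positivity),
      ← ENNReal.ofReal_pow (by positivity)]
    refine ENNReal.ofReal_le_ofReal ?_
    rw [← Real.exp_add, ← Real.exp_add, ← Real.exp_add, ← Real.exp_nat_mul, Real.exp_le_exp]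
    have hpar := parallelogram_law_with_norm ℝ (x - c) (y - c)
    have hmid : ‖midpoint ℝ x y - c‖ ^ 2 = ‖(x - c) + (y - c)‖ ^ 2 / 4 := by
      have : midpoint ℝ x y - c = (2⁻¹ : ℝ) • ((x - c) + (y - c)) := by
        rw [midpoint_eq_smul_add, invOf_eq_inv]
        module
      rw [this, norm_smul, mul_pow]
      norm_num
      ring
    rw [sub_sub_sub_cancel_right] at hpar
    have hid : ‖x - c‖ ^ 2 / (2 * s) + ‖y - c‖ ^ 2 / (2 * s) =
        2 * (‖midpoint ℝ x y - c‖ ^ 2 / (2 * s)) + ‖x - y‖ ^ 2 / (4 * s) := by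
      rw [hmid]
      field_simp
      linear_combination (-2) * hpar
    have := hfg x hx y hy
    push_cast
    linarith)
  rw [conv _ hfc fun x => by positivity, conv _ hgc fun x => by positivity,
    conv _ hhc fun x => by positivity, ← ENNReal.ofReal_mul (by positivity),
    ← ENNReal.ofReal_pow (by positivity)] at key
  exact (ENNReal.ofReal_le_ofReal_iff (by positivity)).1 key

theorem integral_sub_sq_mul_gaussian_le_add (hK : IsCompact K) (hKc : Convex ℝ K)
    (hu : ContDiff ℝ 1 u) (c : EuclideanSpace ℝ (Fin N)) {s δ : ℝ} (hs : 0 < s) (hδ : 0 < δ) :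
    let w := fun x : EuclideanSpace ℝ (Fin N) => Real.exp (-(‖x - c‖ ^ 2 / (2 * s)))
    ∫ z, (u z.1 - u z.2) ^ 2 * (w z.1 * w z.2)
        ∂(volume.restrict K).prod (volume.restrict K) ≤
      2 * s * (1 + δ) * ((∫ x in K, (‖fderiv ℝ u x‖ + δ) ^ 2 * w x) * ∫ x in K, w x) := by
  intro w
  have hw : Continuous w := by fun_prop
  have hw0 : ∀ x, 0 < w x := fun x => Real.exp_pos _
  have huc : Continuous u := hu.continuous
  have hDc : Continuous (fderiv ℝ u) := hu.continuous_fderiv one_ne_zero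
  obtain ⟨ε₀, hε₀, hε₀le⟩ := exists_forall_mul_sub_le hK hKc hu hs hδ
  obtain ⟨M, hM⟩ := hK.exists_bound_of_continuousOn huc.continuousOn
  have hlog : 0 < Real.log (1 + δ) := Real.log_pos (by linarith)
  set ε : ℝ := min ε₀ (Real.log (1 + δ) / (2 * |M| + 1)) with hεdef
  have hε : 0 < ε := lt_min hε₀ (by positivity)
  have hεM : ε * (2 * |M| + 1) ≤ Real.log (1 + δ) :=
    (le_div_iff₀ (by positivity)).1 (min_le_right _ _)
  set π := (volume.restrict K).prod (volume.restrict K) with hπ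
  have hint : ∀ F : EuclideanSpace ℝ (Fin N) × EuclideanSpace ℝ (Fin N) → ℝ, Continuous F →
      Integrable F π := fun F hF => integrable_prod_restrict_of_continuous hK hF
  set G : EuclideanSpace ℝ (Fin N) → ℝ := fun x => (‖fderiv ℝ u x‖ + δ) ^ 2 with hG
  have hGc : Continuous G := by fun_prop
  have hpl := setIntegral_exp_mul_setIntegral_exp_neg_le (f := fun x => ε * u x - s * ε ^ 2 * G x)
    (g := fun x => ε * u x) hK hKc (by fun_prop) (by fun_prop) c hs (fun x hx y hy => by
      have := hε₀le ε hε (min_le_left _ _) x hx y hy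
      simp only [hG]; linarith)
  rw [← integral_prod_mul, sq (∫ x in K, _), ← integral_prod_mul] at hpl
  have hmem : ∀ᵐ z ∂π, z.1 ∈ K ∧ z.2 ∈ K := by
    rw [hπ, Measure.prod_restrict]
    exact ae_restrict_mem (hK.measurableSet.prod hK.measurableSet)
  have hlow : ∫ z, (Real.exp (ε * (u z.1 - u z.2)) - s * ε ^ 2 * (1 + δ) * G z.1) *
      (w z.1 * w z.2) ∂π ≤ ∫ z, w z.1 * w z.2 ∂π := by
    refine le_trans (integral_mono_ae (hint _ (by fun_prop)) (hint _ (by fun_prop)) ?_) hpl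
    filter_upwards [hmem] with z hz
    have hb : Real.exp (ε * (u z.1 - u z.2)) ≤ 1 + δ := by
      rw [← Real.le_log_iff_exp_le (by positivity)]
      refine le_trans ?_ hεM
      gcongr
      have := (abs_le.1 ((hM z.1 hz.1).trans (le_abs_self M))).2
      have := (abs_le.1 ((hM z.2 hz.2).trans (le_abs_self M))).1
      linarith
    have hG0 : 0 ≤ s * ε ^ 2 * G z.1 := by positivity
    have he := Real.one_sub_le_exp_neg (s * ε ^ 2 * G z.1)
    have h1 : Real.exp (ε * (u z.1 - u z.2)) - s * ε ^ 2 * (1 + δ) * G z.1 ≤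
        Real.exp (ε * (u z.1 - u z.2)) * Real.exp (-(s * ε ^ 2 * G z.1)) := by
      nlinarith [mul_le_mul_of_nonneg_left he (Real.exp_pos (ε * (u z.1 - u z.2))).le,
        mul_le_mul_of_nonneg_right hb hG0]
    calc _ ≤ Real.exp (ε * (u z.1 - u z.2)) * Real.exp (-(s * ε ^ 2 * G z.1)) *
          (w z.1 * w z.2) := by
            have := hw0 z.1; have := hw0 z.2; gcongr
      _ = Real.exp (ε * u z.1 - s * ε ^ 2 * G z.1) * w z.1 *
          (Real.exp (-(ε * u z.2)) * w z.2) := by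
            rw [← Real.exp_add, show ε * (u z.1 - u z.2) + -(s * ε ^ 2 * G z.1) =
              (ε * u z.1 - s * ε ^ 2 * G z.1) + -(ε * u z.2) by ring, Real.exp_add]
            ring
  have hswap : ∫ z, Real.exp (ε * (u z.1 - u z.2)) * (w z.1 * w z.2) ∂π =
      ∫ z, Real.exp (-(ε * (u z.1 - u z.2))) * (w z.1 * w z.2) ∂π := by
    rw [hπ, ← integral_prod_swap]
    refine integral_congr_ae (.of_forall fun z => ?_)
    simp only [Prod.fst_swap, Prod.snd_swap]
    rw [mul_comm (w z.2), show ε * (u z.2 - u z.1) = -(ε * (u z.1 - u z.2)) by ring]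
  have hcosh : 2 * (∫ z, w z.1 * w z.2 ∂π) +
      ε ^ 2 * ∫ z, (u z.1 - u z.2) ^ 2 * (w z.1 * w z.2) ∂π ≤
      2 * ∫ z, Real.exp (ε * (u z.1 - u z.2)) * (w z.1 * w z.2) ∂π := by
    nth_rewrite 2 [two_mul]
    nth_rewrite 2 [hswap]
    rw [← integral_const_mul, ← integral_const_mul,
      ← integral_add (hint _ (by fun_prop)) (hint _ (by fun_prop)),
      ← integral_add (hint _ (by fun_prop)) (hint _ (by fun_prop))]
    refine integral_mono (hint _ (by fun_prop)) (hint _ (by fun_prop)) fun z => ?_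
    have h1 := two_add_sq_le_exp_add_exp_neg (ε * (u z.1 - u z.2))
    have h2 := mul_le_mul_of_nonneg_right h1 (mul_pos (hw0 z.1) (hw0 z.2)).le
    simp only
    linarith
  have hsplit : ∫ z, (Real.exp (ε * (u z.1 - u z.2)) - s * ε ^ 2 * (1 + δ) * G z.1) *
      (w z.1 * w z.2) ∂π = (∫ z, Real.exp (ε * (u z.1 - u z.2)) * (w z.1 * w z.2) ∂π) -
        s * ε ^ 2 * (1 + δ) * ((∫ x in K, G x * w x) * ∫ x in K, w x) := by
    rw [← integral_prod_mul, ← integral_const_mul,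
      ← integral_sub (hint _ (by fun_prop)) (hint _ (by fun_prop))]
    refine integral_congr_ae (.of_forall fun z => ?_)
    simp only
    ring
  rw [hsplit] at hlow
  have hfin : ε ^ 2 * ∫ z, (u z.1 - u z.2) ^ 2 * (w z.1 * w z.2) ∂π ≤
      ε ^ 2 * (2 * s * (1 + δ) * ((∫ x in K, G x * w x) * ∫ x in K, w x)) := by
    linarith
  exact le_of_mul_le_mul_left hfin (by positivity)

/-- Poincaré inequality for a Gaussian weight restricted to a compact convex set. -/
theorem integral_sub_sq_mul_gaussian_le (hK : IsCompact K) (hKc : Convex ℝ K)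
    (hu : ContDiff ℝ 1 u) (c : EuclideanSpace ℝ (Fin N)) {s : ℝ} (hs : 0 < s) :
    let w := fun x : EuclideanSpace ℝ (Fin N) => Real.exp (-(‖x - c‖ ^ 2 / (2 * s)))
    ∫ z, (u z.1 - u z.2) ^ 2 * (w z.1 * w z.2)
        ∂(volume.restrict K).prod (volume.restrict K) ≤
      2 * s * ((∫ x in K, ‖fderiv ℝ u x‖ ^ 2 * w x) * ∫ x in K, w x) := by
  intro w
  have hw : Continuous w := by fun_prop
  have hDc : Continuous (fderiv ℝ u) := hu.continuous_fderiv one_ne_zero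
  have hint : ∀ k : EuclideanSpace ℝ (Fin N) → ℝ, Continuous k → IntegrableOn k K :=
    fun k hk => hk.continuousOn.integrableOn_compact hK
  have hexp : ∀ δ : ℝ, ∫ x in K, (‖fderiv ℝ u x‖ + δ) ^ 2 * w x =
      (∫ x in K, ‖fderiv ℝ u x‖ ^ 2 * w x) + 2 * δ * (∫ x in K, ‖fderiv ℝ u x‖ * w x) +
        δ ^ 2 * ∫ x in K, w x := by
    intro δ
    rw [← integral_const_mul, ← integral_const_mul,
      ← integral_add (hint _ (by fun_prop)) (hint _ (by fun_prop)),
      ← integral_add (hint _ (by fun_prop)) (hint _ (by fun_prop))]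
    refine integral_congr_ae (.of_forall fun x => ?_)
    simp only
    ring
  have hcont : Continuous fun δ : ℝ => 2 * s * (1 + δ) *
      (((∫ x in K, ‖fderiv ℝ u x‖ ^ 2 * w x) + 2 * δ * (∫ x in K, ‖fderiv ℝ u x‖ * w x) +
        δ ^ 2 * ∫ x in K, w x) * ∫ x in K, w x) := by fun_prop
  have hlim := (hcont.tendsto 0).mono_left (nhdsWithin_le_nhds (s := Set.Ioi 0))
  have := ge_of_tendsto hlim (Filter.eventually_of_mem self_mem_nhdsWithin fun δ hδ => by
    rw [← hexp]
    exact integral_sub_sq_mul_gaussian_le_add hK hKc hu c hs hδ)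
  simpa using this

end Gaussian

section Convex

variable {N : ℕ} {K : Set (EuclideanSpace ℝ (Fin N))} {u : EuclideanSpace ℝ (Fin N) → ℝ}

/-- Poincaré inequality on a compact convex set, with a dimension-free constant. -/
theorem integral_sub_sq_le_of_convex (hK : IsCompact K) (hKc : Convex ℝ K)
    (hu : ContDiff ℝ 1 u) {D : ℝ} (hD : ∀ x ∈ K, ∀ y ∈ K, dist x y ≤ D) :
    ∫ z, (u z.1 - u z.2) ^ 2 ∂(volume.restrict K).prod (volume.restrict K) ≤
      4 * D ^ 2 * volume.real K * ∫ x in K, ‖fderiv ℝ u x‖ ^ 2 := by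
  rcases eq_or_ne (volume K) 0 with hK0 | hK0
  · simp [Measure.restrict_eq_zero.2 hK0, measureReal_def, hK0]
  obtain ⟨c, hc⟩ : K.Nonempty := nonempty_of_measure_ne_zero hK0
  have hD0 : 0 ≤ D := by simpa using hD c hc c hc
  rcases hD0.eq_or_lt with rfl | hDpos
  · have : ∀ᵐ z ∂(volume.restrict K).prod (volume.restrict K), (u z.1 - u z.2) ^ 2 = 0 := by
      rw [Measure.prod_restrict]
      filter_upwards [ae_restrict_mem (hK.measurableSet.prod hK.measurableSet)] with z hz
      rw [dist_le_zero.1 (hD z.1 hz.1 z.2 hz.2)]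
      simp
    rw [integral_congr_ae this]
    simp
  have huc : Continuous u := hu.continuous
  have hDc : Continuous (fderiv ℝ u) := hu.continuous_fderiv one_ne_zero
  have hint : ∀ k : EuclideanSpace ℝ (Fin N) → ℝ, Continuous k → IntegrableOn k K :=
    fun k hk => hk.continuousOn.integrableOn_compact hK
  have hne : NeZero (volume.restrict K) := ⟨by simpa using hK0⟩
  have hs : 0 < D ^ 2 / 2 := by positivity
  have hgauss := integral_sub_sq_mul_gaussian_le hK hKc hu c hs
  set w : EuclideanSpace ℝ (Fin N) → ℝ := fun x => Real.exp (-(‖x - c‖ ^ 2 / (2 * (D ^ 2 / 2))))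
    with hw
  have hwc : Continuous w := by fun_prop
  have hW : 0 < ∫ x in K, w x := integral_exp_pos (hint w hwc)
  simp only at hgauss
  rw [integral_prod_sub_sq_mul (hint _ hwc) (hint _ (by fun_prop)) (hint _ (by fun_prop))]
    at hgauss
  set W := ∫ x in K, w x
  set m : ℝ := (∫ x in K, u x * w x) / W with hm
  have hmW : ∫ x in K, u x * w x = m * W := by rw [hm]; field_simp
  have hvar : ∫ x in K, (u x - m) ^ 2 * w x = (∫ x in K, u x ^ 2 * w x) - m ^ 2 * W := by
    rw [integral_sub_const_sq_mul (hint w hwc) (hint (fun x => u x * w x) (by fun_prop))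
      (hint (fun x => u x ^ 2 * w x) (by fun_prop)), hmW]
    ring
  have hvar_le : ∫ x in K, (u x - m) ^ 2 * w x ≤
      D ^ 2 / 2 * ∫ x in K, ‖fderiv ℝ u x‖ ^ 2 * w x := by
    rw [hvar]
    rw [hmW] at hgauss
    refine le_of_mul_le_mul_left ?_ hW
    linarith
  have hw1 : ∀ x, w x ≤ 1 := fun x => Real.exp_le_one_iff.2 (by simp; positivity)
  have hwlow : ∀ x ∈ K, 1 ≤ Real.exp 1 * w x := by
    intro x hx
    rw [hw, ← Real.exp_add, Real.one_le_exp_iff]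
    have : ‖x - c‖ ^ 2 ≤ D ^ 2 := by
      gcongr
      rw [← dist_eq_norm]
      exact hD x hx c hc
    have : ‖x - c‖ ^ 2 / (2 * (D ^ 2 / 2)) ≤ 1 := (div_le_one (by positivity)).2 (by linarith)
    linarith
  have hflat : ∫ x in K, (u x - m) ^ 2 ≤
      Real.exp 1 * (D ^ 2 / 2) * ∫ x in K, ‖fderiv ℝ u x‖ ^ 2 := by
    calc ∫ x in K, (u x - m) ^ 2 ≤ ∫ x in K, Real.exp 1 * ((u x - m) ^ 2 * w x) := by
          refine setIntegral_mono_on (hint _ (by fun_prop)) (hint _ (by fun_prop))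
            hK.measurableSet fun x hx => ?_
          have := mul_le_mul_of_nonneg_left (hwlow x hx) (sq_nonneg (u x - m))
          linarith
      _ = Real.exp 1 * ∫ x in K, (u x - m) ^ 2 * w x := integral_const_mul _ _
      _ ≤ Real.exp 1 * (D ^ 2 / 2 * ∫ x in K, ‖fderiv ℝ u x‖ ^ 2 * w x) := by gcongr
      _ ≤ Real.exp 1 * (D ^ 2 / 2 * ∫ x in K, ‖fderiv ℝ u x‖ ^ 2) := by
          refine mul_le_mul_of_nonneg_left (mul_le_mul_of_nonneg_left ?_ (by positivity))
            (Real.exp_pos 1).le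
          refine integral_mono (hint (fun x => ‖fderiv ℝ u x‖ ^ 2 * w x) (by fun_prop))
            (hint (fun x => ‖fderiv ℝ u x‖ ^ 2) (by fun_prop)) fun x => ?_
          exact mul_le_of_le_one_right (by positivity) (hw1 x)
      _ = _ := by ring
  have hpair : ∫ z, (u z.1 - u z.2) ^ 2 ∂(volume.restrict K).prod (volume.restrict K) =
      2 * (volume.real K * (∫ x in K, (u x - m) ^ 2) - (∫ x in K, (u x - m)) ^ 2) := by
    have := integral_prod_sub_sq_mul (μ := volume.restrict K) (u := fun x => u x - m)
      (w := fun _ => 1) (hint _ (by fun_prop)) (hint _ (by fun_prop)) (hint _ (by fun_prop))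
    simpa using this
  rw [hpair]
  have he : Real.exp 1 ≤ 4 := by have := Real.exp_one_lt_d9; linarith
  have hI : 0 ≤ ∫ x in K, ‖fderiv ℝ u x‖ ^ 2 := by positivity
  have hV : 0 ≤ volume.real K := measureReal_nonneg
  calc _ ≤ 2 * (volume.real K * ∫ x in K, (u x - m) ^ 2) := by
        have := sq_nonneg (∫ x in K, (u x - m)); linarith
    _ ≤ 2 * (volume.real K * (4 * (D ^ 2 / 2) * ∫ x in K, ‖fderiv ℝ u x‖ ^ 2)) := by
        gcongr
        exact hflat.trans (by gcongr)
    _ = _ := by ring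

end Convex

/-- Layer cake formula with a density. -/
theorem lintegral_mul_ofReal_eq_lintegral_setLIntegral {α : Type*} [MeasurableSpace α]
    {μ : Measure α} {F : α → ℝ≥0∞} (hF : Measurable F) {m : α → ℝ} (hm : Measurable m)
    (hm0 : ∀ x, 0 ≤ m x) :
    ∫⁻ x, F x * ENNReal.ofReal (m x) ∂μ =
      ∫⁻ a in Set.Ioi (0 : ℝ), ∫⁻ x in {x | a ≤ m x}, F x ∂μ := by
  have h := lintegral_eq_lintegral_meas_le (μ.withDensity F) (.of_forall hm0) hm.aemeasurable
  rw [lintegral_withDensity_eq_lintegral_mul _ hF hm.ennreal_ofReal] at h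
  simpa only [Pi.mul_apply, withDensity_apply _ (measurableSet_le measurable_const hm)] using h

/-- Weighted Poincaré inequality with a weight `φ` whose superlevel sets are
convex. -/
theorem weighted_poincare (N : ℕ) (hN : 1 ≤ N)
    (φ : EuclideanSpace ℝ (Fin N) → ℝ) (hφc : Continuous φ)
    (hφs : HasCompactSupport φ) (hφne : (tsupport φ).Nonempty)
    (hφ0 : ∀ x, 0 ≤ φ x) (hφ1 : ∀ x, φ x ≤ 1)
    (hconv : ∀ a : ℝ, a ≤ 1 → Convex ℝ {x | a ≤ φ x})
    (u : EuclideanSpace ℝ (Fin N) → ℝ) (hu : ContDiff ℝ 1 u)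
    (hu2 : Integrable (fun x => (u x) ^ 2))
    (hDu2 : Integrable (fun x => ‖fderiv ℝ u x‖ ^ 2)) :
    (∫ x, (u x - (∫ y, u y * φ y) / (∫ y, φ y)) ^ 2 * φ x) ≤
      (2 * Metric.diam (tsupport φ) ^ 2 * (volume (tsupport φ)).toReal /
          ∫ y, φ y) *
        ∫ x, ‖fderiv ℝ u x‖ ^ 2 * φ x := by
  have huc : Continuous u := hu.continuous
  have hDc : Continuous (fderiv ℝ u) := hu.continuous_fderiv one_ne_zero
  have hint : ∀ k : EuclideanSpace ℝ (Fin N) → ℝ, Continuous k →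
      Integrable fun x => k x * φ x := fun k hk =>
    (hk.mul hφc).integrable_of_hasCompactSupport hφs.mul_left
  have hφi : Integrable φ := hφc.integrable_of_hasCompactSupport hφs
  obtain ⟨x₀, hx₀⟩ : ∃ x, φ x ≠ 0 := by
    by_contra! h
    have : φ = 0 := funext h
    simp [this] at hφne
  have hW : 0 < ∫ y, φ y :=
    hφc.integral_pos_of_hasCompactSupport_nonneg_nonzero hφs hφ0 hx₀
  set W := ∫ y, φ y with hWdef
  set d := Metric.diam (tsupport φ) with hd
  set V := (volume (tsupport φ)).toReal with hV
  have hsub : ∀ a : ℝ, 0 < a → {x | a ≤ φ x} ⊆ tsupport φ := fun a ha x hx =>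
    subset_tsupport φ (ha.trans_le hx).ne'
  have hcomp : ∀ a : ℝ, 0 < a → IsCompact {x | a ≤ φ x} := fun a ha =>
    hφs.of_isClosed_subset (isClosed_le continuous_const hφc) (hsub a ha)
  have hcvx : ∀ a : ℝ, Convex ℝ {x | a ≤ φ x} := by
    intro a
    rcases le_or_gt a 1 with ha | ha
    · exact hconv a ha
    · have : {x | a ≤ φ x} = ∅ := Set.eq_empty_of_forall_notMem fun x hx =>
        not_lt.2 ((show a ≤ φ x from hx).trans (hφ1 x)) ha
      rw [this]; exact convex_empty
  have hlevel : ∀ a : ℝ, 0 < a →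
      ∫⁻ z in {x | a ≤ φ x} ×ˢ {x | a ≤ φ x}, ENNReal.ofReal ((u z.1 - u z.2) ^ 2) ≤
        ENNReal.ofReal (4 * d ^ 2 * V) *
          ∫⁻ x in {x | a ≤ φ x}, ENNReal.ofReal (‖fderiv ℝ u x‖ ^ 2) := by
    intro a ha
    have hK := hcomp a ha
    rw [Measure.volume_eq_prod, ← Measure.prod_restrict,
      ← ofReal_integral_eq_lintegral_ofReal
        (integrable_prod_restrict_of_continuous hK (by fun_prop))
        (.of_forall fun z => sq_nonneg _),
      ← ofReal_integral_eq_lintegral_ofReal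
        ((by fun_prop : Continuous fun x => ‖fderiv ℝ u x‖ ^ 2).continuousOn.integrableOn_compact
          hK) (.of_forall fun z => sq_nonneg _), ← ENNReal.ofReal_mul (by positivity)]
    refine ENNReal.ofReal_le_ofReal ?_
    refine (integral_sub_sq_le_of_convex hK (hcvx a) hu (D := d) fun x hx y hy =>
      Metric.dist_le_diam_of_mem hφs.isBounded (hsub a ha hx) (hsub a ha hy)).trans ?_
    gcongr
    exact ENNReal.toReal_mono hφs.measure_lt_top.ne (measure_mono (hsub a ha))
  have hlint : ∫⁻ z : EuclideanSpace ℝ (Fin N) × EuclideanSpace ℝ (Fin N),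
      ENNReal.ofReal ((u z.1 - u z.2) ^ 2 * (φ z.1 * φ z.2)) ≤
      ENNReal.ofReal (4 * d ^ 2 * V) * ∫⁻ x, ENNReal.ofReal (‖fderiv ℝ u x‖ ^ 2 * φ x) := by
    calc _ ≤ ∫⁻ z : EuclideanSpace ℝ (Fin N) × EuclideanSpace ℝ (Fin N),
          ENNReal.ofReal ((u z.1 - u z.2) ^ 2) * ENNReal.ofReal (min (φ z.1) (φ z.2)) := by
          refine lintegral_mono fun z => ?_
          rw [← ENNReal.ofReal_mul (sq_nonneg _)]
          refine ENNReal.ofReal_le_ofReal (mul_le_mul_of_nonneg_left (le_min ?_ ?_) (sq_nonneg _))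
          · exact mul_le_of_le_one_right (hφ0 _) (hφ1 _)
          · exact mul_le_of_le_one_left (hφ0 _) (hφ1 _)
      _ = ∫⁻ a in Set.Ioi (0 : ℝ), ∫⁻ z in {x | a ≤ φ x} ×ˢ {x | a ≤ φ x},
          ENNReal.ofReal ((u z.1 - u z.2) ^ 2) := by
          rw [lintegral_mul_ofReal_eq_lintegral_setLIntegral
            (by fun_prop : Continuous fun z : EuclideanSpace ℝ (Fin N) × EuclideanSpace ℝ (Fin N) =>
              (u z.1 - u z.2) ^ 2).measurable.ennreal_ofReal
            (by fun_prop : Continuous fun z : EuclideanSpace ℝ (Fin N) × EuclideanSpace ℝ (Fin N) =>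
              min (φ z.1) (φ z.2)).measurable fun z => le_min (hφ0 _) (hφ0 _)]
          simp only [le_min_iff]
          rfl
      _ ≤ ∫⁻ a in Set.Ioi (0 : ℝ), ENNReal.ofReal (4 * d ^ 2 * V) *
          ∫⁻ x in {x | a ≤ φ x}, ENNReal.ofReal (‖fderiv ℝ u x‖ ^ 2) :=
          setLIntegral_mono' measurableSet_Ioi hlevel
      _ = _ := by
          rw [lintegral_const_mul' _ _ ENNReal.ofReal_ne_top,
            ← lintegral_mul_ofReal_eq_lintegral_setLIntegral
              (by fun_prop : Continuous fun x => ‖fderiv ℝ u x‖ ^ 2).measurable.ennreal_ofReal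
              hφc.measurable hφ0]
          simp only [ENNReal.ofReal_mul (sq_nonneg _)]
  have hpair_int : Integrable fun z : EuclideanSpace ℝ (Fin N) × EuclideanSpace ℝ (Fin N) =>
      (u z.1 - u z.2) ^ 2 * (φ z.1 * φ z.2) := by
    refine Continuous.integrable_of_hasCompactSupport (by fun_prop) ?_
    refine HasCompactSupport.intro (hφs.prod hφs) fun z hz => ?_
    rw [Set.mem_prod, not_and_or] at hz
    rcases hz with hz | hz <;> simp [image_eq_zero_of_notMem_tsupport hz]
  have hpair : ∫ z : EuclideanSpace ℝ (Fin N) × EuclideanSpace ℝ (Fin N),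
      (u z.1 - u z.2) ^ 2 * (φ z.1 * φ z.2) ≤
      4 * d ^ 2 * V * ∫ x, ‖fderiv ℝ u x‖ ^ 2 * φ x := by
    have hnn : 0 ≤ ∫ x, ‖fderiv ℝ u x‖ ^ 2 * φ x :=
      integral_nonneg fun x => mul_nonneg (sq_nonneg _) (hφ0 x)
    rw [← ENNReal.ofReal_le_ofReal_iff (by positivity), ENNReal.ofReal_mul (by positivity),
      ofReal_integral_eq_lintegral_ofReal hpair_int
        (.of_forall fun z => mul_nonneg (sq_nonneg _) (mul_nonneg (hφ0 _) (hφ0 _))),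
      ofReal_integral_eq_lintegral_ofReal (hint _ (by fun_prop))
        (.of_forall fun x => mul_nonneg (sq_nonneg _) (hφ0 x))]
    exact hlint
  rw [Measure.volume_eq_prod, integral_prod_sub_sq_mul hφi (hint _ huc) (hint _ (by fun_prop)),
    ← hWdef] at hpair
  set m : ℝ := (∫ y, u y * φ y) / W with hm
  have hmW : ∫ y, u y * φ y = m * W := by rw [hm]; field_simp
  have hvar : ∫ x, (u x - m) ^ 2 * φ x = (∫ x, u x ^ 2 * φ x) - m ^ 2 * W := by
    rw [integral_sub_const_sq_mul hφi (hint _ huc) (hint _ (by fun_prop)), hmW]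
    ring
  rw [hvar, div_mul_eq_mul_div, le_div_iff₀ hW]
  rw [hmW] at hpair
  linarith
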